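/- Let d ≥ 1, 0 < γ < d, a ≥ 0 and t ≠ 0. Let u₁, u₂, u₃ be Schwartz functions on ℝ^d and set v_j = U(−t) u_j, where U(τ)f = F^{−1}(e^{−4π² i τ |ξ|²} Ff). Then there exists a nonzero complex constant c, depending only on d, γ, the sign of t, and on whether a = 0 or a > 0 (but not on |t|, a, or the u_j), such that M_t U(−t) H_{a,γ}(u₁, u₂, u₃) = c |t|^{−γ} Ĥ_{a,γ,t}(M_t v₁, R M_t v₂, M_t v₃), where M_t w(x) = e^{i|x|²/(4t)} w(x) and R w(x) = w(−x). -/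

import Mathlib

open MeasureTheory Real FourierTransform RealInnerProductSpace
open scoped ENNReal

/-- Convolution of two complex functions on `ℝ^d`. -/
noncomputable def convC {d : ℕ} (f g : EuclideanSpace ℝ (Fin d) → ℂ) :
    EuclideanSpace ℝ (Fin d) → ℂ :=
  fun x => ∫ y, f y * g (x - y)

/-- Convolution of two real functions on `ℝ^d`. -/
noncomputable def convR {d : ℕ} (f g : EuclideanSpace ℝ (Fin d) → ℝ) :
    EuclideanSpace ℝ (Fin d) → ℝ :=
  fun x => ∫ y, f y * g (x - y)

/-- The Riesz kernel `|x|^{γ-d}` on `ℝ^d`. -/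
noncomputable def riesz (d : ℕ) (γ : ℝ) : EuclideanSpace ℝ (Fin d) → ℝ :=
  fun x => ‖x‖ ^ (γ - (d : ℝ))

/-- The kernel `S_{a,t}(ξ) = a|t| (4a²t² + |ξ|²)^{-(d+1)/2}`. -/
noncomputable def Skernel (d : ℕ) (a t : ℝ) : EuclideanSpace ℝ (Fin d) → ℝ :=
  fun ξ => a * |t| * (4 * a ^ 2 * t ^ 2 + ‖ξ‖ ^ 2) ^ (-(((d : ℝ) + 1) / 2))

/-- The multiplier in `Ĥ_{a,γ,t}`: `S_{a,t} ∗ |·|^{γ-d}` if `a > 0`, `|·|^{γ-d}` if `a = 0`. -/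
noncomputable def hartreeKernel (d : ℕ) (γ a t : ℝ) : EuclideanSpace ℝ (Fin d) → ℝ :=
  if a = 0 then riesz d γ else convR (Skernel d a t) (riesz d γ)

/-- The trilinear operator `Ĥ_{a,γ,t}(f,g,h) = [(S_{a,t} ∗ |·|^{γ-d}) (f ∗ ḡ)] ∗ h`. -/
noncomputable def hartreeTrilinear (d : ℕ) (γ a t : ℝ)
    (f g h : EuclideanSpace ℝ (Fin d) → ℂ) : EuclideanSpace ℝ (Fin d) → ℂ :=
  convC (fun x => (hartreeKernel d γ a t x : ℂ) *
    convC f (fun y => (starRingEnd ℂ) (g y)) x) h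

/-- The Hartree trilinear operator
`H_{a,γ}(f,g,h)(x) = ((e^{-a|·|} |·|^{-γ}) ∗ (f ḡ))(x) · h(x)` on `ℝ^d`. -/
noncomputable def hartreeOp (d : ℕ) (a γ : ℝ)
    (f g h : EuclideanSpace ℝ (Fin d) → ℂ) : EuclideanSpace ℝ (Fin d) → ℂ :=
  fun x =>
    (∫ y : EuclideanSpace ℝ (Fin d),
      ((Real.exp (-(a * ‖y‖)) * ‖y‖ ^ (-γ) : ℝ) : ℂ) *
        (f (x - y) * (starRingEnd ℂ) (g (x - y)))) * h x

/-- The free Schrödinger propagator `U(τ)f = 𝓕⁻¹(e^{-4π²iτ|ξ|²} 𝓕f)`,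
written as an explicit Fourier integral. -/
noncomputable def schrodingerProp (d : ℕ) (τ : ℝ) (f : EuclideanSpace ℝ (Fin d) → ℂ) :
    EuclideanSpace ℝ (Fin d) → ℂ :=
  fun x => ∫ ξ : EuclideanSpace ℝ (Fin d),
    Complex.exp (-(4 * (π : ℂ) ^ 2 * (τ : ℂ) * (‖ξ‖ : ℂ) ^ 2) * Complex.I) *
      𝓕 f ξ * Complex.exp (2 * (π : ℂ) * Complex.I * (⟪x, ξ⟫ : ℝ))

/-- The multiplication operator `M_t w(x) = e^{i|x|²/(4t)} w(x)`. -/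
noncomputable def Mt (d : ℕ) (t : ℝ) (w : EuclideanSpace ℝ (Fin d) → ℂ) :
    EuclideanSpace ℝ (Fin d) → ℂ :=
  fun x => Complex.exp (Complex.I * (‖x‖ : ℂ) ^ 2 / (4 * (t : ℂ))) * w x


section helpers
open Set Filter

lemma inv_gamma {b c : ℝ} (hb : 0 < b) (hc : 0 < c) :
    IntegrableOn (fun s : ℝ => s ^ (-b - 1) * Real.exp (-(c / s))) (Ioi 0) ∧
    ∫ s in Ioi (0:ℝ), s ^ (-b - 1) * Real.exp (-(c / s)) = (1 / c) ^ b * Real.Gamma b := by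
  have e : ∀ x ∈ Ioi (0:ℝ), (|(-1:ℝ)| * x ^ ((-1:ℝ) - 1)) •
      ((fun r : ℝ => r ^ (b - 1) * Real.exp (-(c * r))) (x ^ (-1:ℝ)))
      = x ^ (-b - 1) * Real.exp (-(c / x)) := by
    intro x hx
    have hx : 0 < x := hx
    simp only [smul_eq_mul, abs_neg, abs_one, one_mul]
    rw [← Real.rpow_mul hx.le, ← mul_assoc, ← Real.rpow_add hx, Real.rpow_neg_one]
    congr 2
    ring
  constructor
  · refine IntegrableOn.congr_fun ?_ e measurableSet_Ioi
    refine (integrableOn_Ioi_comp_rpow_iff (fun r : ℝ => r ^ (b - 1) * Real.exp (-(c * r)))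
      (by norm_num : (-1:ℝ) ≠ 0)).2 ?_
    have := integrableOn_rpow_mul_exp_neg_mul_rpow (p := 1) (s := b - 1) (b := c) (by linarith) one_pos hc
    simpa using this
  · rw [← Real.integral_rpow_mul_exp_neg_mul_Ioi hb hc,
      ← integral_comp_rpow_Ioi (fun r : ℝ => r ^ (b - 1) * Real.exp (-(c * r))) (by norm_num : (-1:ℝ) ≠ 0)]
    exact (setIntegral_congr_fun measurableSet_Ioi e).symm

lemma dir_gamma {b c : ℝ} (hb : 0 < b) (hc : 0 < c) :
    IntegrableOn (fun s : ℝ => s ^ (b - 1) * Real.exp (-(c * s))) (Ioi 0) ∧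
    ∫ s in Ioi (0:ℝ), s ^ (b - 1) * Real.exp (-(c * s)) = (1 / c) ^ b * Real.Gamma b := by
  refine ⟨?_, Real.integral_rpow_mul_exp_neg_mul_Ioi hb hc⟩
  have := integrableOn_rpow_mul_exp_neg_mul_rpow (p := 1) (s := b - 1) (b := c) (by linarith) one_pos hc
  simpa using this

/-- `∫ over u>0 of exp(-(p u - q/u)^2) = √π/(2p)`. -/
lemma glasser {p q : ℝ} (hp : 0 < p) (hq : 0 < q) :
    IntegrableOn (fun u : ℝ => Real.exp (-(p * u - q / u) ^ 2)) (Ioi 0) ∧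
    ∫ u in Ioi (0:ℝ), Real.exp (-(p * u - q / u) ^ 2) = √π / (2 * p) := by
  have hder : ∀ u ∈ Ioi (0:ℝ), HasDerivWithinAt (fun u : ℝ => p * u - q / u) (p + q / u ^ 2) (Ioi 0) u := by
    intro u hu
    have hu : u ≠ 0 := ne_of_gt hu
    have h1 := ((hasDerivAt_id u).const_mul p).sub ((hasDerivAt_inv hu).const_mul q)
    refine HasDerivAt.hasDerivWithinAt ?_
    convert h1 using 1
    · funext y
      simp [div_eq_mul_inv]
    · ring
  have hmono : StrictMonoOn (fun u : ℝ => p * u - q / u) (Ioi 0) := by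
    intro u hu v hv huv
    have hu : 0 < u := hu
    have : q / v < q / u := by gcongr
    have : p * u < p * v := by gcongr
    simp only
    linarith
  have himg : (fun u : ℝ => p * u - q / u) '' (Ioi 0) = univ := by
    ext y
    simp only [mem_image, mem_Ioi, mem_univ, iff_true]
    have hs : y ^ 2 < y ^ 2 + 4 * p * q := by have := mul_pos hp hq; linarith
    have h2 : |y| < √(y ^ 2 + 4 * p * q) := by
      rw [← Real.sqrt_sq_eq_abs]; exact Real.sqrt_lt_sqrt (sq_nonneg _) hs
    have h3 : 0 < y + √(y ^ 2 + 4 * p * q) := by have := neg_abs_le y; linarith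
    refine ⟨(y + √(y ^ 2 + 4 * p * q)) / (2 * p), by positivity, ?_⟩
    have h4 : √(y ^ 2 + 4 * p * q) ^ 2 = y ^ 2 + 4 * p * q := Real.sq_sqrt (by nlinarith [sq_nonneg y])
    generalize √(y ^ 2 + 4 * p * q) = r at *
    field_simp
    nlinarith
  have hgi : Integrable (fun x : ℝ => Real.exp (-x ^ 2)) := by
    simpa using integrable_exp_neg_mul_sq (b := 1) one_pos
  have hg : ∫ x : ℝ, Real.exp (-x ^ 2) = √π := by
    simpa using integral_gaussian 1
  have hI : IntegrableOn (fun u : ℝ => (p + q / u ^ 2) * Real.exp (-(p * u - q / u) ^ 2)) (Ioi 0) := by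
    have := (integrableOn_image_iff_integrableOn_abs_deriv_smul measurableSet_Ioi hder hmono.injOn
      (fun x : ℝ => Real.exp (-x ^ 2))).1 (by rw [himg]; exact hgi.integrableOn)
    refine this.congr_fun ?_ measurableSet_Ioi
    intro u hu
    have : 0 < p + q / u ^ 2 := by positivity
    simp [abs_of_pos this]
  have hval : ∫ u in Ioi (0:ℝ), (p + q / u ^ 2) * Real.exp (-(p * u - q / u) ^ 2) = √π := by
    have := (integral_image_eq_integral_abs_deriv_smul measurableSet_Ioi hder hmono.injOn
      (fun x : ℝ => Real.exp (-x ^ 2)))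
    rw [himg, setIntegral_univ, hg] at this
    rw [this]
    refine setIntegral_congr_fun measurableSet_Ioi ?_
    intro u hu
    have : 0 < p + q / u ^ 2 := by positivity
    simp [abs_of_pos this]
  have hI1 : IntegrableOn (fun u : ℝ => Real.exp (-(p * u - q / u) ^ 2)) (Ioi 0) := by
    refine (hI.const_mul (1 / p)).mono' ?_ ?_
    · exact Measurable.aestronglyMeasurable (by fun_prop)
    · refine (ae_restrict_iff' measurableSet_Ioi).2 (Eventually.of_forall fun u hu => ?_)
      rw [Real.norm_eq_abs, abs_of_pos (Real.exp_pos _), ← mul_assoc]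
      refine le_mul_of_one_le_left (Real.exp_pos _).le ?_
      have : 0 ≤ q / u ^ 2 := by positivity
      rw [mul_add, one_div_mul_cancel hp.ne']
      have : 0 ≤ 1 / p * (q / u ^ 2) := by positivity
      linarith
  refine ⟨hI1, ?_⟩
  have hI2 : IntegrableOn (fun u : ℝ => q / u ^ 2 * Real.exp (-(p * u - q / u) ^ 2)) (Ioi 0) := by
    refine (hI.sub (hI1.const_mul p)).congr ?_
    refine Eventually.of_forall fun u => ?_
    simp; ring
  have hsymm : ∫ u in Ioi (0:ℝ), q / u ^ 2 * Real.exp (-(p * u - q / u) ^ 2)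
      = p * ∫ u in Ioi (0:ℝ), Real.exp (-(p * u - q / u) ^ 2) := by
    have h1 := integral_comp_rpow_Ioi (fun u : ℝ => Real.exp (-(q * u - p / u) ^ 2)) (by norm_num : (-1:ℝ) ≠ 0)
    have h2 := integral_comp_mul_left_Ioi (fun u : ℝ => Real.exp (-(p * u - q / u) ^ 2)) 0 (div_pos hq hp)
    have e1 : ∫ u in Ioi (0:ℝ), q / u ^ 2 * Real.exp (-(p * u - q / u) ^ 2)
      = q * ∫ u in Ioi (0:ℝ), Real.exp (-(q * u - p / u) ^ 2) := by
      rw [← h1, ← integral_const_mul]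
      refine setIntegral_congr_fun measurableSet_Ioi ?_
      intro u hu
      have hu : 0 < u := hu
      simp only [smul_eq_mul, abs_neg, abs_one, one_mul, Real.rpow_neg_one]
      rw [show ((-1:ℝ) - 1) = -((2:ℕ):ℝ) by norm_num, Real.rpow_neg hu.le, Real.rpow_natCast, ← mul_assoc]
      congr 2
      field_simp
      ring
    have e2 : ∫ u in Ioi (0:ℝ), Real.exp (-(q * u - p / u) ^ 2) =
       ∫ x in Ioi (0:ℝ), Real.exp (-(p * (q / p * x) - q / (q / p * x)) ^ 2) := by
      refine setIntegral_congr_fun measurableSet_Ioi ?_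
      intro u hu
      have hu : 0 < u := hu
      simp only
      congr 3
      field_simp
    rw [e1, e2, h2, mul_zero, smul_eq_mul, ← mul_assoc]
    congr 1
    field_simp
  have hsum : ∫ u in Ioi (0:ℝ), (p + q / u ^ 2) * Real.exp (-(p * u - q / u) ^ 2)
     = p * (∫ u in Ioi (0:ℝ), Real.exp (-(p * u - q / u) ^ 2)) +
       ∫ u in Ioi (0:ℝ), q / u ^ 2 * Real.exp (-(p * u - q / u) ^ 2) := by
    rw [← integral_const_mul, ← integral_add (hI1.const_mul p) hI2]
    congr 1; ext u; ring
  rw [hval, hsymm] at hsum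
  rw [eq_div_iff (by positivity)]
  linarith

lemma subord {p q : ℝ} (hp : 0 < p) (hq : 0 < q) :
    IntegrableOn (fun s : ℝ => s ^ (-(3/2):ℝ) * Real.exp (-(p ^ 2 / s)) * Real.exp (-(q ^ 2 * s))) (Ioi 0) ∧
    ∫ s in Ioi (0:ℝ), s ^ (-(3/2):ℝ) * Real.exp (-(p ^ 2 / s)) * Real.exp (-(q ^ 2 * s)) =
      √π / p * Real.exp (-(2 * p * q)) := by
  have hpow : (-(1/2):ℝ) ≠ 0 := by norm_num
  obtain ⟨g1, g2⟩ := glasser hp hq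
  have e : ∀ s ∈ Ioi (0:ℝ), (2 * Real.exp (-(2 * p * q))) * ((|(-(1/2):ℝ)| * s ^ ((-(1/2):ℝ) - 1)) •
      ((fun u : ℝ => Real.exp (-(p * u - q / u) ^ 2)) (s ^ (-(1/2):ℝ))))
      = s ^ (-(3/2):ℝ) * Real.exp (-(p ^ 2 / s)) * Real.exp (-(q ^ 2 * s)) := by
    intro s hs
    have hs : 0 < s := hs
    simp only [smul_eq_mul]
    have h1 : s ^ (-(1/2):ℝ) = (√s)⁻¹ := by rw [Real.rpow_neg hs.le, Real.sqrt_eq_rpow]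
    rw [h1, mul_assoc (s ^ _), ← Real.exp_add, show (-(1/2):ℝ) - 1 = -(3/2) by norm_num,
      show |(-(1/2):ℝ)| = 1/2 by norm_num [abs_of_neg]]
    have : -(p ^ 2 / s) + -(q ^ 2 * s) = -(2*p*q) + -(p * (√s)⁻¹ - q / (√s)⁻¹) ^ 2 := by
      have h2 : √s ^ 2 = s := Real.sq_sqrt hs.le
      have h3 : 0 < √s := Real.sqrt_pos.2 hs
      nth_rewrite 1 2 [← h2]
      field_simp
      ring
    rw [this, Real.exp_add]
    ring
  constructor
  · refine IntegrableOn.congr_fun ?_ e measurableSet_Ioi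
    exact ((integrableOn_Ioi_comp_rpow_iff _ hpow).2 g1).const_mul _
  · rw [← setIntegral_congr_fun measurableSet_Ioi e, integral_const_mul,
      integral_comp_rpow_Ioi (fun u : ℝ => Real.exp (-(p * u - q / u) ^ 2)) hpow, g2]
    field_simp

end helpers

section helpers2
open Set Filter

lemma ae_ne_zero {d : ℕ} (hd : 1 ≤ d) :
    ∀ᵐ y : EuclideanSpace ℝ (Fin d), y ≠ 0 := by
  have : Nonempty (Fin d) := ⟨⟨0, hd⟩⟩
  exact compl_mem_ae_iff.2 (measure_singleton 0)

lemma swap_lem {d : ℕ} (hd : 1 ≤ d) (W : EuclideanSpace ℝ (Fin d) → ℝ → ℝ)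
    (hW : Measurable (Function.uncurry W)) (hWp : ∀ y, ∀ s ∈ Ioi (0:ℝ), 0 ≤ W y s)
    (K : EuclideanSpace ℝ (Fin d) → ℝ)
    (h1 : ∀ y ≠ 0, IntegrableOn (W y) (Ioi 0)) (h2 : ∀ y ≠ 0, ∫ s in Ioi (0:ℝ), W y s = K y)
    (g : EuclideanSpace ℝ (Fin d) → ℂ) (hg : AEStronglyMeasurable g)
    (hKg : Integrable (fun y => (K y : ℂ) * g y)) :
    ∫ y, (K y : ℂ) * g y = ∫ s in Ioi (0:ℝ), ∫ y, (W y s : ℂ) * g y := by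
  have e : ∫ y, (K y : ℂ) * g y = ∫ y, ∫ s in Ioi (0:ℝ), (W y s : ℂ) * g y := by
    refine integral_congr_ae ?_
    filter_upwards [ae_ne_zero hd] with y hy
    rw [integral_mul_const, integral_complex_ofReal, h2 y hy]
  rw [e]
  refine integral_integral_swap ?_
  have hm : AEStronglyMeasurable (Function.uncurry fun (y : EuclideanSpace ℝ (Fin d)) (s : ℝ) => (W y s : ℂ) * g y)
      (volume.prod (volume.restrict (Ioi 0))) := by
    refine AEStronglyMeasurable.mul ?_ ?_
    · exact (Complex.measurable_ofReal.comp hW).aestronglyMeasurable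
    · exact hg.comp_fst
  refine (integrable_prod_iff hm).2 ⟨?_, ?_⟩
  · filter_upwards [ae_ne_zero hd] with y hy
    exact (Integrable.ofReal (𝕜 := ℂ) (h1 y hy)).mul_const (g y)
  · refine hKg.norm.congr ?_
    filter_upwards [ae_ne_zero hd] with y hy
    have : ∫ s in Ioi (0:ℝ), ‖Function.uncurry (fun (y : EuclideanSpace ℝ (Fin d)) (s : ℝ) => (W y s : ℂ) * g y) (y, s)‖
       = ∫ s in Ioi (0:ℝ), W y s * ‖g y‖ := by
      refine setIntegral_congr_fun measurableSet_Ioi ?_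
      intro s hs
      simp [abs_of_nonneg (hWp y s hs)]
    rw [this, integral_mul_const, h2 y hy, norm_mul, Complex.norm_real, Real.norm_eq_abs, abs_of_nonneg]
    rw [← h2 y hy]
    exact setIntegral_nonneg measurableSet_Ioi (hWp y)

lemma gauss_mult {d : ℕ} {s : ℝ} (hs : 0 < s) (g : EuclideanSpace ℝ (Fin d) → ℂ) (hg : Integrable g) :
    ∫ y, (Real.exp (-(π * ‖y‖ ^ 2 * s)) : ℂ) * g y =
    ∫ η, ((s ^ (-((d:ℝ) / 2)) * Real.exp (-(π * ‖η‖ ^ 2 / s)) : ℝ) : ℂ) * 𝓕 g η := by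
  have hb : 0 < ((π / s : ℝ) : ℂ).re := by rw [Complex.ofReal_re]; positivity
  have hG : Integrable (fun v : EuclideanSpace ℝ (Fin d) => Complex.exp (-((π / s : ℝ) : ℂ) * ‖v‖ ^ 2)) := by
    simpa using GaussianFourier.integrable_cexp_neg_mul_sq_norm_add hb 0 (0 : EuclideanSpace ℝ (Fin d))
  have key := VectorFourier.integral_fourierIntegral_smul_eq_flip (L := innerₗ (EuclideanSpace ℝ (Fin d)))
    (μ := volume) (ν := volume) (e := Real.fourierChar) Real.continuous_fourierChar
    (by simpa using! continuous_inner) hG hg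
  have key2 : ∫ y, 𝓕 (fun v : EuclideanSpace ℝ (Fin d) => Complex.exp (-((π / s : ℝ) : ℂ) * ‖v‖ ^ 2)) y * g y
     = ∫ η : EuclideanSpace ℝ (Fin d), Complex.exp (-((π / s : ℝ) : ℂ) * ‖η‖ ^ 2) * 𝓕 g η := by
    simpa using! key
  have e1 : ∀ y : EuclideanSpace ℝ (Fin d),
     𝓕 (fun v : EuclideanSpace ℝ (Fin d) => Complex.exp (-((π / s : ℝ) : ℂ) * ‖v‖ ^ 2)) y =
      ((s ^ ((d:ℝ) / 2) : ℝ) : ℂ) * (Real.exp (-(π * ‖y‖ ^ 2 * s)) : ℂ) := by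
    intro y
    rw [fourier_gaussian_innerProductSpace hb]
    congr 1
    · rw [finrank_euclideanSpace_fin, Complex.ofReal_cpow hs.le]
      congr 1
      · push_cast
        have : (π:ℂ) ≠ 0 := by exact_mod_cast Real.pi_ne_zero
        have : (s:ℂ) ≠ 0 := by exact_mod_cast hs.ne'
        field_simp
      · push_cast; rfl
    · rw [Complex.ofReal_exp]
      congr 1
      push_cast
      have : (π:ℂ) ≠ 0 := by exact_mod_cast Real.pi_ne_zero
      have : (s:ℂ) ≠ 0 := by exact_mod_cast hs.ne'
      field_simp
  simp_rw [e1, mul_assoc ((s ^ ((d:ℝ) / 2) : ℝ) : ℂ)] at key2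
  rw [integral_const_mul] at key2
  have hc : ((s ^ ((d:ℝ) / 2) : ℝ) : ℂ) ≠ 0 := by
    exact_mod_cast (Real.rpow_pos_of_pos hs _).ne'
  rw [← mul_right_inj' hc, key2, ← integral_const_mul]
  congr 1
  ext η
  rw [← mul_assoc, ← Complex.ofReal_mul, ← mul_assoc, ← Real.rpow_add hs]
  simp only [add_neg_cancel, Real.rpow_zero, one_mul, Complex.ofReal_exp]
  congr 2
  push_cast
  ring

lemma gauss_sup {d : ℕ} (hd : 1 ≤ d) (w : ℝ → ℝ) (hw : Measurable w) (hwp : ∀ s ∈ Ioi (0:ℝ), 0 ≤ w s)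
    (K k : EuclideanSpace ℝ (Fin d) → ℝ)
    (hK : ∀ y ≠ 0, IntegrableOn (fun s => w s * Real.exp (-(π * ‖y‖ ^ 2 * s))) (Ioi 0) ∧
      ∫ s in Ioi (0:ℝ), w s * Real.exp (-(π * ‖y‖ ^ 2 * s)) = K y)
    (hk : ∀ η ≠ 0, IntegrableOn (fun s => w s * (s ^ (-((d:ℝ) / 2)) * Real.exp (-(π * ‖η‖ ^ 2 / s)))) (Ioi 0) ∧
      ∫ s in Ioi (0:ℝ), w s * (s ^ (-((d:ℝ) / 2)) * Real.exp (-(π * ‖η‖ ^ 2 / s))) = k η)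
    (g : EuclideanSpace ℝ (Fin d) → ℂ) (hg : Integrable g)
    (hKg : Integrable (fun y => (K y : ℂ) * g y))
    (hkg : Integrable (fun η => (k η : ℂ) * 𝓕 g η)) :
    ∫ y, (K y : ℂ) * g y = ∫ η, (k η : ℂ) * 𝓕 g η := by
  have hF : Continuous (𝓕 g) := VectorFourier.fourierIntegral_continuous Real.continuous_fourierChar
    (by simpa using! continuous_inner) hg
  rw [swap_lem hd (fun y s => w s * Real.exp (-(π * ‖y‖ ^ 2 * s))) (by fun_prop)
    (fun y s hs => mul_nonneg (hwp s hs) (Real.exp_pos _).le) K (fun y hy => (hK y hy).1)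
    (fun y hy => (hK y hy).2) g hg.1 hKg,
   swap_lem hd (fun η s => w s * (s ^ (-((d:ℝ) / 2)) * Real.exp (-(π * ‖η‖ ^ 2 / s)))) (by fun_prop)
    (fun y s hs => mul_nonneg (hwp s hs) (mul_nonneg (Real.rpow_nonneg (le_of_lt hs) _) (Real.exp_pos _).le))
    k (fun y hy => (hk y hy).1)
    (fun y hy => (hk y hy).2) (𝓕 g) hF.aestronglyMeasurable hkg]
  refine setIntegral_congr_fun measurableSet_Ioi ?_
  intro s hs
  have := gauss_mult hs g hg
  simp only [Complex.ofReal_mul (w s), mul_assoc (w s : ℂ)]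
  rw [integral_const_mul, integral_const_mul, this]

/-- constant in the Riesz formula -/
noncomputable def rieszC (d : ℕ) (γ : ℝ) : ℝ :=
  (1 / π) ^ (((d:ℝ) - γ) / 2) * Real.Gamma (((d:ℝ) - γ) / 2) /
   ((1 / π) ^ (γ / 2) * Real.Gamma (γ / 2))

lemma rieszC_pos {d : ℕ} {γ : ℝ} (hγ0 : 0 < γ) (hγd : γ < d) : 0 < rieszC d γ := by
  have h1 : 0 < ((d:ℝ) - γ) / 2 := by linarith
  have h2 : 0 < γ / 2 := by linarith
  have := Real.Gamma_pos_of_pos h1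
  have := Real.Gamma_pos_of_pos h2
  unfold rieszC
  positivity

lemma riesz_formula {d : ℕ} (hd : 1 ≤ d) {γ : ℝ} (hγ0 : 0 < γ) (hγd : γ < d)
    (g : EuclideanSpace ℝ (Fin d) → ℂ) (hg : Integrable g)
    (hKg : Integrable (fun y => ((‖y‖ ^ (-γ) : ℝ) : ℂ) * g y))
    (hkg : Integrable (fun η => ((riesz d γ η : ℝ) : ℂ) * 𝓕 g η)) :
    ∫ y, ((‖y‖ ^ (-γ) : ℝ) : ℂ) * g y = (rieszC d γ : ℂ) * ∫ η, ((riesz d γ η : ℝ) : ℂ) * 𝓕 g η := by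
  have h1 : 0 < ((d:ℝ) - γ) / 2 := by linarith
  have h2 : 0 < γ / 2 := by linarith
  have g1 := Real.Gamma_pos_of_pos h1
  have g2 := Real.Gamma_pos_of_pos h2
  have e1 : ∀ (x b : ℝ), 0 ≤ x → (1 / (π * x ^ 2)) ^ (b / 2) = (1 / π) ^ (b / 2) * x ^ (-b) := by
    intro x b hx
    rw [show 1 / (π * x ^ 2) = (1 / π) * (x⁻¹) ^ 2 by field_simp,
      Real.mul_rpow (by positivity) (by positivity), ← Real.rpow_natCast (x⁻¹) 2, ← Real.rpow_mul (by positivity),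
      Real.inv_rpow hx, Real.rpow_neg hx]
    congr 3
    push_cast; ring
  have := gauss_sup hd (fun s => s ^ (γ / 2 - 1)) (by fun_prop)
    (fun s hs => Real.rpow_nonneg (le_of_lt hs) _)
    (fun y => ((1 / π) ^ (γ / 2) * Real.Gamma (γ / 2)) * ‖y‖ ^ (-γ))
    (fun η => ((1 / π) ^ (((d:ℝ) - γ) / 2) * Real.Gamma (((d:ℝ) - γ) / 2)) * riesz d γ η)
    (fun y hy => by
      have hy' : 0 < ‖y‖ := norm_pos_iff.2 hy
      obtain ⟨a1, a2⟩ := dir_gamma h2 (c := π * ‖y‖ ^ 2) (by positivity)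
      refine ⟨a1, ?_⟩
      rw [a2, e1 _ _ hy'.le]; ring)
    (fun η hy => by
      have hy' : 0 < ‖η‖ := norm_pos_iff.2 hy
      obtain ⟨a1, a2⟩ := inv_gamma h1 (c := π * ‖η‖ ^ 2) (by positivity)
      have e2 : EqOn (fun s : ℝ => s ^ (-(((d:ℝ) - γ) / 2) - 1) * rexp (-(π * ‖η‖ ^ 2 / s)))
         (fun s : ℝ => s ^ (γ / 2 - 1) * (s ^ (-((d:ℝ) / 2)) * rexp (-(π * ‖η‖ ^ 2 / s)))) (Ioi 0) := by
        intro s hs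
        simp only
        rw [← mul_assoc, ← Real.rpow_add hs]
        congr 2
        ring
      refine ⟨a1.congr_fun e2 measurableSet_Ioi, ?_⟩
      rw [← setIntegral_congr_fun measurableSet_Ioi e2, a2, e1 _ _ hy'.le, riesz, neg_sub]; ring)
    g hg
    (by
      refine (hKg.const_mul ((((1 / π) ^ (γ / 2) * Real.Gamma (γ / 2)) : ℝ) : ℂ)).congr (Eventually.of_forall fun y => ?_)
      simp only [Complex.ofReal_mul]; ring)
    (by
      refine (hkg.const_mul ((((1 / π) ^ (((d:ℝ) - γ) / 2) * Real.Gamma (((d:ℝ) - γ) / 2)) : ℝ) : ℂ)).congr (Eventually.of_forall fun y => ?_)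
      simp only [Complex.ofReal_mul]; ring)
  simp only [Complex.ofReal_mul (_ * _), mul_assoc ((_ * _ : ℝ) : ℂ)] at this
  rw [integral_const_mul, integral_const_mul] at this
  have hc : (((1 / π) ^ (γ / 2) * Real.Gamma (γ / 2) : ℝ) : ℂ) ≠ 0 := by
    have : 0 < (1 / π) ^ (γ / 2) * Real.Gamma (γ / 2) := by positivity
    exact_mod_cast this.ne'
  rw [← mul_right_inj' hc, this, ← mul_assoc, ← Complex.ofReal_mul]
  congr 2
  unfold rieszC
  field_simp

/-- Poisson kernel -/
noncomputable def poissonK (d : ℕ) (a : ℝ) : EuclideanSpace ℝ (Fin d) → ℝ :=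
  fun η => a / (2 * π) * ((1 / (a ^ 2 / (4 * π) + π * ‖η‖ ^ 2)) ^ (((d:ℝ) + 1) / 2) * Real.Gamma (((d:ℝ) + 1) / 2))

lemma poisson_formula {d : ℕ} (hd : 1 ≤ d) {a : ℝ} (ha : 0 < a)
    (g : EuclideanSpace ℝ (Fin d) → ℂ) (hg : Integrable g)
    (hKg : Integrable (fun y => ((Real.exp (-(a * ‖y‖)) : ℝ) : ℂ) * g y))
    (hkg : Integrable (fun η => ((poissonK d a η : ℝ) : ℂ) * 𝓕 g η)) :
    ∫ y, ((Real.exp (-(a * ‖y‖)) : ℝ) : ℂ) * g y = ∫ η, ((poissonK d a η : ℝ) : ℂ) * 𝓕 g η := by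
  have hpi : 0 < √π := Real.sqrt_pos.2 Real.pi_pos
  have hpi2 : √π ^ 2 = π := Real.sq_sqrt Real.pi_pos.le
  have hc : 0 < a / (2 * π) := by positivity
  refine gauss_sup hd (fun s => a / (2 * π) * (s ^ (-(3/2):ℝ) * Real.exp (-((a / (2 * √π)) ^ 2 / s)))) (by fun_prop)
    (fun s hs => mul_nonneg hc.le (mul_nonneg (Real.rpow_nonneg (le_of_lt hs) _) (Real.exp_pos _).le)) _ _ ?_ ?_ g hg hKg hkg
  · intro y hy
    have hy' : 0 < ‖y‖ := norm_pos_iff.2 hy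
    obtain ⟨a1, a2⟩ := subord (p := a / (2 * √π)) (q := √π * ‖y‖) (by positivity) (by positivity)
    simp only [mul_pow, hpi2] at a1 a2
    simp only [mul_assoc (a / (2 * π))]
    refine ⟨a1.const_mul _, ?_⟩
    rw [integral_const_mul, a2, ← mul_assoc]
    have : a / (2 * π) * (√π / (a / (2 * √π))) = 1 := by
      field_simp
      exact hpi2
    rw [this, one_mul]
    congr 2
    field_simp
  · intro η hη
    obtain ⟨a1, a2⟩ := inv_gamma (b := ((d:ℝ) + 1) / 2) (c := a ^ 2 / (4 * π) + π * ‖η‖ ^ 2) (by positivity) (by positivity)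
    have e2 : EqOn (fun s : ℝ => a / (2 * π) * (s ^ (-(((d:ℝ) + 1) / 2) - 1) * rexp (-((a ^ 2 / (4 * π) + π * ‖η‖ ^ 2) / s))))
         (fun s : ℝ => a / (2 * π) * (s ^ (-(3/2):ℝ) * Real.exp (-((a / (2 * √π)) ^ 2 / s))) * (s ^ (-((d:ℝ) / 2)) * rexp (-(π * ‖η‖ ^ 2 / s)))) (Ioi 0) := by
      intro s hs
      simp only
      rw [show -(((d:ℝ) + 1) / 2) - 1 = -(3/2) + -((d:ℝ) / 2) by ring, Real.rpow_add hs,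
        show (a / (2 * √π)) ^ 2 = a ^ 2 / (4 * π) by rw [div_pow, mul_pow, hpi2]; norm_num,
        add_div, neg_add, Real.exp_add]
      ring
    refine ⟨IntegrableOn.congr_fun (a1.const_mul _) e2 measurableSet_Ioi, ?_⟩
    rw [← setIntegral_congr_fun measurableSet_Ioi e2, integral_const_mul, a2, poissonK]

end helpers2

section helpers3
open Set Filter

lemma fourier_cont {d : ℕ} {g : EuclideanSpace ℝ (Fin d) → ℂ} (hg : Integrable g) : Continuous (𝓕 g) :=
  VectorFourier.fourierIntegral_continuous Real.continuous_fourierChar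
    (by simpa using! continuous_inner) hg

lemma fourier_bdd {d : ℕ} (g : EuclideanSpace ℝ (Fin d) → ℂ) (x : EuclideanSpace ℝ (Fin d)) :
    ‖𝓕 g x‖ ≤ ∫ y, ‖g y‖ :=
  VectorFourier.norm_fourierIntegral_le_integral_norm _ _ _ _ _

lemma sing_ball {d : ℕ} (hd : 1 ≤ d) {β : ℝ} (hβ : β < d) :
    IntegrableOn (fun x : EuclideanSpace ℝ (Fin d) => ‖x‖ ^ (-β)) (Metric.ball 0 1) := by
  have : Nonempty (Fin d) := ⟨⟨0, hd⟩⟩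
  rw [integrableOn_fun_norm_addHaar volume (f := fun r : ℝ => r ^ (-β)), finrank_euclideanSpace_fin]
  have h : IntegrableOn (fun y : ℝ => y ^ ((d:ℝ) - 1 - β)) (Ioo 0 1) := by
    have := (intervalIntegral.intervalIntegrable_rpow' (a := 0) (b := 1) (r := (d:ℝ) - 1 - β) (by linarith))
    rw [intervalIntegrable_iff_integrableOn_Ioo_of_le zero_le_one] at this
    exact this
  refine h.congr_fun ?_ measurableSet_Ioo
  intro y hy
  simp only [smul_eq_mul]
  rw [← Real.rpow_natCast, ← Real.rpow_add hy.1, Nat.cast_sub hd]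
  congr 1
  push_cast; ring

lemma sing_int {d : ℕ} (hd : 1 ≤ d) {β : ℝ} (hβ0 : 0 ≤ β) (hβ : β < d)
    {F : EuclideanSpace ℝ (Fin d) → ℂ} (hF : Integrable F) {C : ℝ} (hC : ∀ x, ‖F x‖ ≤ C) :
    Integrable (fun x => ((‖x‖ ^ (-β) : ℝ) : ℂ) * F x) := by
  have h1 := ((integrable_indicator_iff measurableSet_ball).2 (sing_ball hd hβ)).const_mul C
  refine (h1.add hF.norm).mono' ?_ (Eventually.of_forall fun x => ?_)
  · refine AEStronglyMeasurable.mul ?_ hF.1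
    exact Measurable.aestronglyMeasurable (by fun_prop)
  · have hp : 0 ≤ ‖x‖ ^ (-β) := by positivity
    have hC0 : 0 ≤ C := (norm_nonneg _).trans (hC x)
    rw [norm_mul, Complex.norm_real, Real.norm_eq_abs, abs_of_nonneg hp]
    simp only [Pi.add_apply, indicator]
    split_ifs with hx
    · have := mul_le_mul_of_nonneg_left (hC x) hp
      have := norm_nonneg (F x)
      linarith
    · have : ‖x‖ ^ (-β) ≤ 1 := Real.rpow_le_one_of_one_le_of_nonpos (by simpa using hx) (by linarith)
      have := mul_le_mul_of_nonneg_right this (norm_nonneg (F x))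
      linarith

lemma poissonK_cont (d : ℕ) {a : ℝ} (ha : 0 < a) : Continuous (poissonK d a) := by
  unfold poissonK
  refine continuous_const.mul (Continuous.mul ?_ continuous_const)
  refine Continuous.rpow_const ?_ (fun x => Or.inr (by positivity))
  refine continuous_const.div (by fun_prop) (fun x => by positivity)

lemma poissonK_nonneg (d : ℕ) {a : ℝ} (ha : 0 < a) (x) : 0 ≤ poissonK d a x := by
  have : 0 < Real.Gamma (((d:ℝ) + 1) / 2) := Real.Gamma_pos_of_pos (by positivity)
  unfold poissonK
  positivity

lemma poissonK_neg (d : ℕ) (a : ℝ) (x) : poissonK d a (-x) = poissonK d a x := by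
  simp [poissonK]

lemma poissonK_bound (d : ℕ) {a : ℝ} (ha : 0 < a) : ∃ C : ℝ, 0 ≤ C ∧ ∀ x, poissonK d a x ≤ C * (1 + ‖x‖) ^ (-((d:ℝ) + 1)) := by
  have hG : 0 < Real.Gamma (((d:ℝ) + 1) / 2) := Real.Gamma_pos_of_pos (by positivity)
  set m := min (a ^ 2 / (4 * π)) π with hm
  have hm0 : 0 < m := lt_min (by positivity) Real.pi_pos
  refine ⟨a / (2 * π) * ((2 / m) ^ (((d:ℝ) + 1) / 2) * Real.Gamma (((d:ℝ) + 1) / 2)), by positivity, fun x => ?_⟩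
  have h1 : (1 / (a ^ 2 / (4 * π) + π * ‖x‖ ^ 2)) ≤ (2 / m) * ((1 + ‖x‖)⁻¹) ^ 2 := by
    have : m / 2 * (1 + ‖x‖) ^ 2 ≤ a ^ 2 / (4 * π) + π * ‖x‖ ^ 2 := by
      have e1 : m ≤ a ^ 2 / (4 * π) := min_le_left _ _
      have e2 : m * ‖x‖ ^ 2 ≤ π * ‖x‖ ^ 2 := by gcongr; exact min_le_right _ _
      have e3 : 0 ≤ m * (1 - ‖x‖) ^ 2 := by positivity
      linarith [show m / 2 * (1 + ‖x‖) ^ 2 + m * (1 - ‖x‖) ^ 2 / 2 = m + m * ‖x‖ ^ 2 by ring]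
    calc _ ≤ 1 / (m / 2 * (1 + ‖x‖) ^ 2) := by gcongr
      _ = _ := by field_simp
  have h2 : (1 / (a ^ 2 / (4 * π) + π * ‖x‖ ^ 2)) ^ (((d:ℝ) + 1) / 2) ≤
      (2 / m) ^ (((d:ℝ) + 1) / 2) * (1 + ‖x‖) ^ (-((d:ℝ) + 1)) := by
    refine (Real.rpow_le_rpow (by positivity) h1 (by positivity)).trans_eq ?_
    rw [Real.mul_rpow (by positivity) (by positivity), ← Real.rpow_natCast _ 2, ← Real.rpow_mul (by positivity),
      Real.inv_rpow (by positivity), Real.rpow_neg (by positivity)]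
    congr 3
    push_cast; ring
  unfold poissonK
  calc _ ≤ a / (2 * π) * ((2 / m) ^ (((d:ℝ) + 1) / 2) * (1 + ‖x‖) ^ (-((d:ℝ) + 1)) * Real.Gamma (((d:ℝ) + 1) / 2)) := by gcongr
    _ = _ := by ring

lemma poissonK_int (d : ℕ) {a : ℝ} (ha : 0 < a) : Integrable (poissonK d a) := by
  obtain ⟨C, hC, h⟩ := poissonK_bound d ha
  have := (integrable_one_add_norm (E := EuclideanSpace ℝ (Fin d)) (μ := volume) (r := (d:ℝ) + 1) (by simp)).const_mul C
  refine this.mono' (poissonK_cont d ha).aestronglyMeasurable (Eventually.of_forall fun x => ?_)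
  rw [Real.norm_eq_abs, abs_of_nonneg (poissonK_nonneg d ha x)]
  exact h x

lemma poissonK_bdd (d : ℕ) {a : ℝ} (ha : 0 < a) : ∃ C : ℝ, 0 ≤ C ∧ ∀ x, poissonK d a x ≤ C := by
  obtain ⟨C, hC, h⟩ := poissonK_bound d ha
  refine ⟨C, hC, fun x => (h x).trans ?_⟩
  refine mul_le_of_le_one_right hC ?_
  have hd0 : (0:ℝ) ≤ d := by positivity
  exact Real.rpow_le_one_of_one_le_of_nonpos (by linarith [norm_nonneg x]) (by linarith)

lemma fourier_mod {d : ℕ} (h : EuclideanSpace ℝ (Fin d) → ℂ) (ξ η : EuclideanSpace ℝ (Fin d)) :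
    𝓕 (fun y => Complex.exp (-(2 * π * ⟪y, ξ⟫ : ℝ) * Complex.I) * h y) η = 𝓕 h (η + ξ) := by
  rw [Real.fourier_eq', Real.fourier_eq']
  congr 1
  ext y
  simp only [smul_eq_mul]
  rw [← mul_assoc, ← Complex.exp_add, inner_add_right]
  congr 2
  push_cast; ring

lemma fourier_poisson {d : ℕ} (hd : 1 ≤ d) {a : ℝ} (ha : 0 < a)
    {h : EuclideanSpace ℝ (Fin d) → ℂ} (hh : Integrable h) (ξ : EuclideanSpace ℝ (Fin d)) :
    𝓕 (fun y => ((Real.exp (-(a * ‖y‖)) : ℝ) : ℂ) * h y) ξ = ∫ ζ, (poissonK d a (ξ - ζ) : ℂ) * 𝓕 h ζ := by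
  have hm : Integrable (fun y => Complex.exp (-(2 * π * ⟪y, ξ⟫ : ℝ) * Complex.I) * h y) := by
    refine hh.bdd_mul (c := 1) ?_ ?_
    · exact Continuous.aestronglyMeasurable (by fun_prop)
    · refine Eventually.of_forall fun y => ?_
      rw [← Complex.ofReal_neg, Complex.norm_exp_ofReal_mul_I]
  have h1 := poisson_formula hd ha _ hm
    (by
      refine hm.bdd_mul (c := 1) ?_ ?_
      · exact Continuous.aestronglyMeasurable (by fun_prop)
      · refine Eventually.of_forall fun y => ?_
        rw [Complex.norm_real, Real.norm_eq_abs, abs_of_pos (Real.exp_pos _), Real.exp_le_one_iff]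
        have : 0 ≤ a * ‖y‖ := by positivity
        linarith)
    (by
      refine Integrable.mul_bdd (c := ∫ y, ‖h y‖) (Integrable.ofReal (𝕜 := ℂ) (poissonK_int d ha)) ?_ ?_
      · exact (fourier_cont hm).aestronglyMeasurable
      · refine Eventually.of_forall fun y => ?_
        rw [fourier_mod]
        exact fourier_bdd _ _)
  rw [Real.fourier_eq']
  have e1 : ∫ y, Complex.exp (((-2 * π * ⟪y, ξ⟫ : ℝ) : ℂ) * Complex.I) • (((Real.exp (-(a * ‖y‖)) : ℝ) : ℂ) * h y)
     = ∫ y, ((Real.exp (-(a * ‖y‖)) : ℝ) : ℂ) * (Complex.exp (-(2 * π * ⟪y, ξ⟫ : ℝ) * Complex.I) * h y) := by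
    congr 1; ext y
    rw [smul_eq_mul, show (((-2 * π * ⟪y, ξ⟫ : ℝ) : ℂ)) = -(2 * π * ⟪y, ξ⟫ : ℝ) by push_cast; ring]
    ring
  rw [e1, h1]
  simp_rw [fourier_mod]
  rw [← integral_sub_right_eq_self _ ξ]
  congr 1; ext ζ
  rw [← poissonK_neg, neg_sub, sub_add_cancel]

end helpers3

section helpers4
open Set Filter

/-- Fourier side kernel -/
noncomputable def kA (d : ℕ) (γ a : ℝ) : EuclideanSpace ℝ (Fin d) → ℝ :=
  fun η => rieszC d γ * (if a = 0 then riesz d γ η else convR (poissonK d a) (riesz d γ) η)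

lemma riesz_meas (d : ℕ) (γ : ℝ) : Measurable (riesz d γ) := by
  unfold riesz; fun_prop

lemma riesz_nonneg (d : ℕ) (γ : ℝ) (x) : 0 ≤ riesz d γ x := by
  unfold riesz; positivity

lemma riesz_int {d : ℕ} (hd : 1 ≤ d) {γ : ℝ} (hγ0 : 0 < γ) (hγd : γ < d)
    {F : EuclideanSpace ℝ (Fin d) → ℂ} (hF : Integrable F) {C : ℝ} (hC : ∀ x, ‖F x‖ ≤ C) :
    Integrable (fun x => (riesz d γ x : ℂ) * F x) := by
  have := sing_int hd (β := (d:ℝ) - γ) (by linarith) (by linarith) hF hC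
  simpa only [riesz, neg_sub] using this

lemma prod_int {d : ℕ} (hd : 1 ≤ d) {γ : ℝ} (hγ0 : 0 < γ) (hγd : γ < d) {a : ℝ} (ha : 0 < a)
    {G : EuclideanSpace ℝ (Fin d) → ℂ} (hG : Integrable G) (hGc : Continuous G) {C : ℝ} (hC : ∀ x, ‖G x‖ ≤ C) :
    Integrable (Function.uncurry fun ξ ζ : EuclideanSpace ℝ (Fin d) =>
      (riesz d γ ξ : ℂ) * ((poissonK d a (ξ - ζ) : ℂ) * G ζ)) (volume.prod volume) := by
  obtain ⟨C1, hC1, hP⟩ := poissonK_bdd d ha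
  have hPc := poissonK_cont d ha
  have hm : AEStronglyMeasurable (Function.uncurry fun ξ ζ : EuclideanSpace ℝ (Fin d) =>
      (riesz d γ ξ : ℂ) * ((poissonK d a (ξ - ζ) : ℂ) * G ζ)) (volume.prod volume) := by
    refine AEStronglyMeasurable.mul ?_ ?_
    · exact (Complex.measurable_ofReal.comp ((riesz_meas d γ).comp measurable_fst)).aestronglyMeasurable
    · exact Continuous.aestronglyMeasurable (by fun_prop)
  have hnorm : ∀ ξ ζ : EuclideanSpace ℝ (Fin d), ‖(poissonK d a (ξ - ζ) : ℂ)‖ ≤ C1 := by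
    intro ξ ζ
    rw [Complex.norm_real, Real.norm_eq_abs, abs_of_nonneg (poissonK_nonneg d ha _)]
    exact hP _
  refine (integrable_prod_iff hm).2 ⟨Eventually.of_forall fun ξ => ?_, ?_⟩
  · have hb : Integrable (fun ζ => (poissonK d a (ξ - ζ) : ℂ) * G ζ) := by
      refine hG.bdd_mul (c := C1) ?_ (Eventually.of_forall fun ζ => hnorm ξ ζ)
      exact Continuous.aestronglyMeasurable (by fun_prop)
    exact hb.const_mul (riesz d γ ξ : ℂ)
  · have hconv : Integrable (fun ξ : EuclideanSpace ℝ (Fin d) => ∫ ζ, ‖G ζ‖ * poissonK d a (ξ - ζ)) := by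
      have := (hG.norm.convolution_integrand (ContinuousLinearMap.mul ℝ ℝ) (poissonK_int d ha)).integral_prod_left
      simpa using this
    have h2 := riesz_int hd hγ0 hγd (F := fun ξ => ((∫ ζ, ‖G ζ‖ * poissonK d a (ξ - ζ) : ℝ) : ℂ))
      (Integrable.ofReal (𝕜 := ℂ) hconv) (C := C1 * ∫ ζ, ‖G ζ‖) (fun ξ => by
        rw [Complex.norm_real]
        refine (norm_integral_le_integral_norm _).trans ?_
        rw [← integral_const_mul]
        refine integral_mono_of_nonneg (Eventually.of_forall fun _ => norm_nonneg _) (hG.norm.const_mul _) ?_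
        refine Eventually.of_forall fun ζ => ?_
        simp only [norm_mul, norm_norm]
        rw [mul_comm]
        refine mul_le_mul_of_nonneg_right ?_ (norm_nonneg _)
        simpa using hnorm ξ ζ)
    refine h2.norm.congr (Eventually.of_forall fun ξ => ?_)
    simp only [Function.uncurry_apply_pair, norm_mul]
    rw [integral_const_mul]
    congr 1
    rw [Complex.norm_real, Real.norm_eq_abs, abs_of_nonneg]
    · congr 1; ext ζ
      rw [Complex.norm_real, Real.norm_eq_abs, abs_of_nonneg (poissonK_nonneg d ha _), mul_comm]
    · exact integral_nonneg fun ζ => mul_nonneg (norm_nonneg _) (poissonK_nonneg d ha _)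

lemma convR_poisson {d : ℕ} {γ a : ℝ} (ζ : EuclideanSpace ℝ (Fin d)) :
    ∫ ξ, riesz d γ ξ * poissonK d a (ξ - ζ) = convR (poissonK d a) (riesz d γ) ζ := by
  unfold convR
  rw [← integral_sub_left_eq_self _ volume ζ]
  congr 1; ext y
  rw [show ζ - y - ζ = -y by abel, poissonK_neg, mul_comm]

lemma kernel_formula {d : ℕ} (hd : 1 ≤ d) {γ : ℝ} (hγ0 : 0 < γ) (hγd : γ < d) {a : ℝ} (ha : 0 ≤ a)
    {h : EuclideanSpace ℝ (Fin d) → ℂ} (hh : Integrable h) {C : ℝ} (hC : ∀ x, ‖h x‖ ≤ C)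
    (hF : Integrable (𝓕 h)) :
    Integrable (fun η => (kA d γ a η : ℂ) * 𝓕 h η) ∧
    ∫ y, ((Real.exp (-(a * ‖y‖)) * ‖y‖ ^ (-γ) : ℝ) : ℂ) * h y = ∫ η, (kA d γ a η : ℂ) * 𝓕 h η := by
  rcases ha.eq_or_lt with rfl | ha
  · have hi := riesz_int hd hγ0 hγd hF (fourier_bdd h)
    have e : (fun η => (kA d γ 0 η : ℂ) * 𝓕 h η) = fun η => (rieszC d γ : ℂ) * ((riesz d γ η : ℂ) * 𝓕 h η) := by
      ext η; simp only [kA, if_true]; push_cast; ring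
    rw [e]
    refine ⟨hi.const_mul _, ?_⟩
    rw [integral_const_mul, ← riesz_formula hd hγ0 hγd h hh (sing_int hd hγ0.le hγd hh hC) hi]
    simp
  · have hFc := fourier_cont hh
    have hp := prod_int hd hγ0 hγd ha hF hFc (fourier_bdd h)
    have hin : ∀ ζ, ∫ ξ, (riesz d γ ξ : ℂ) * ((poissonK d a (ξ - ζ) : ℂ) * 𝓕 h ζ)
        = (convR (poissonK d a) (riesz d γ) ζ : ℂ) * 𝓕 h ζ := by
      intro ζ
      rw [← convR_poisson, ← integral_complex_ofReal, ← integral_mul_const]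
      congr 1; ext ξ; push_cast; ring
    have hki : Integrable fun ζ => (convR (poissonK d a) (riesz d γ) ζ : ℂ) * 𝓕 h ζ := by
      have := hp.integral_prod_right
      simpa only [Function.uncurry_apply_pair, hin] using this
    have e : (fun η => (kA d γ a η : ℂ) * 𝓕 h η) =
        fun η => (rieszC d γ : ℂ) * ((convR (poissonK d a) (riesz d γ) η : ℂ) * 𝓕 h η) := by
      ext η; simp only [kA, if_neg ha.ne']; push_cast; ring
    rw [e]
    refine ⟨hki.const_mul _, ?_⟩
    have hexp : ∀ y : EuclideanSpace ℝ (Fin d), ‖((Real.exp (-(a * ‖y‖)) : ℝ) : ℂ)‖ ≤ 1 := by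
      intro y
      rw [Complex.norm_real, Real.norm_eq_abs, abs_of_pos (Real.exp_pos _), Real.exp_le_one_iff]
      have : 0 ≤ a * ‖y‖ := by positivity
      linarith
    have hg : Integrable fun y => ((Real.exp (-(a * ‖y‖)) : ℝ) : ℂ) * h y := by
      refine hh.bdd_mul (c := 1) ?_ (Eventually.of_forall hexp)
      exact Continuous.aestronglyMeasurable (by fun_prop)
    have hgb : ∀ y, ‖((Real.exp (-(a * ‖y‖)) : ℝ) : ℂ) * h y‖ ≤ C := by
      intro y
      rw [norm_mul]
      exact (mul_le_of_le_one_left (norm_nonneg _) (hexp y)).trans (hC y)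
    have hFg : (𝓕 fun y => ((Real.exp (-(a * ‖y‖)) : ℝ) : ℂ) * h y) = fun ξ => ∫ ζ, (poissonK d a (ξ - ζ) : ℂ) * 𝓕 h ζ :=
      funext fun ξ => fourier_poisson hd ha hh ξ
    have hRF : Integrable fun η => (riesz d γ η : ℂ) * 𝓕 (fun y => ((Real.exp (-(a * ‖y‖)) : ℝ) : ℂ) * h y) η := by
      rw [hFg]
      have := hp.integral_prod_left
      simpa only [Function.uncurry_apply_pair, integral_const_mul] using this
    have h1 := riesz_formula hd hγ0 hγd _ hg (sing_int hd hγ0.le hγd hg hgb) hRF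
    have e0 : ∫ y, ((Real.exp (-(a * ‖y‖)) * ‖y‖ ^ (-γ) : ℝ) : ℂ) * h y =
       ∫ y, ((‖y‖ ^ (-γ) : ℝ) : ℂ) * (((Real.exp (-(a * ‖y‖)) : ℝ) : ℂ) * h y) := by
      congr 1; ext y; push_cast; ring
    rw [e0, h1, integral_const_mul, hFg]
    congr 1
    simp_rw [← integral_const_mul]
    rw [integral_integral_swap hp]
    simp_rw [hin]

lemma A_formula {d : ℕ} (hd : 1 ≤ d) {γ : ℝ} (hγ0 : 0 < γ) (hγd : γ < d) {a : ℝ} (ha : 0 ≤ a)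
    (P : SchwartzMap (EuclideanSpace ℝ (Fin d)) ℂ) :
    Integrable (fun η => (kA d γ a η : ℂ) * 𝓕 (⇑P) η) ∧ ∀ x,
    ∫ y, ((Real.exp (-(a * ‖y‖)) * ‖y‖ ^ (-γ) : ℝ) : ℂ) * P (x - y) =
      ∫ η, (kA d γ a η : ℂ) * 𝓕 (⇑P) η * Complex.exp ((2 * π * ⟪x, η⟫ : ℝ) * Complex.I) := by
  have hb : ∃ C, ∀ x, ‖P x‖ ≤ C := by
    obtain ⟨C, hC⟩ := P.decay 0 0
    exact ⟨C, fun x => by simpa using hC.2 x⟩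
  obtain ⟨C, hC⟩ := hb
  have hFP : Integrable (𝓕 (⇑P)) := by
    rw [← SchwartzMap.fourier_coe]; exact (𝓕 P).integrable
  refine ⟨(kernel_formula hd hγ0 hγd ha P.integrable hC hFP).1, fun x => ?_⟩
  have hF : 𝓕 (fun y => P (x + y)) = fun η => 𝓕 (⇑P) η * Complex.exp ((2 * π * ⟪x, η⟫ : ℝ) * Complex.I) := by
    ext η
    rw [Real.fourier_eq', Real.fourier_eq', ← integral_mul_const,
      ← integral_add_left_eq_self (μ := volume) (fun v => Complex.exp (((-2 * π * ⟪v, η⟫ : ℝ) : ℂ) * Complex.I) • P v * Complex.exp ((2 * π * ⟪x, η⟫ : ℝ) * Complex.I)) x]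
    congr 1; ext y
    simp only [smul_eq_mul]
    have e : Complex.exp (((-2 * π * ⟪y, η⟫ : ℝ) : ℂ) * Complex.I) =
        Complex.exp (((-2 * π * ⟪x + y, η⟫ : ℝ) : ℂ) * Complex.I) * Complex.exp ((2 * π * ⟪x, η⟫ : ℝ) * Complex.I) := by
      rw [← Complex.exp_add, inner_add_left]
      congr 1
      push_cast; ring
    rw [e]; ring
  have hFi : Integrable (𝓕 (fun y => P (x + y))) := by
    rw [hF]
    refine hFP.mul_bdd (c := 1) (Continuous.aestronglyMeasurable (by fun_prop)) (Eventually.of_forall fun η => ?_)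
    rw [Complex.norm_exp_ofReal_mul_I]
  have := (kernel_formula hd hγ0 hγd ha (P.integrable.comp_add_left x) (fun y => hC (x + y)) hFi).2
  rw [← integral_neg_eq_self]
  simp only [norm_neg, sub_neg_eq_add]
  rw [this, hF]
  congr 1; ext η; ring

end helpers4

section helpers5
open Set Filter

/-- unimodular phase -/
noncomputable def ph (r : ℝ) : ℂ := Complex.exp ((r : ℂ) * Complex.I)

lemma ph_add (r s : ℝ) : ph (r + s) = ph r * ph s := by
  unfold ph; rw [← Complex.exp_add]; congr 1; push_cast; ring

lemma norm_ph (r : ℝ) : ‖ph r‖ = 1 := by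
  unfold ph; rw [Complex.norm_exp_ofReal_mul_I]

lemma ph_cont : Continuous ph := by unfold ph; fun_prop

lemma conj_ph (r : ℝ) : (starRingEnd ℂ) (ph r) = ph (-r) := by
  unfold ph; rw [← Complex.exp_conj]; congr 1; simp

lemma ph_mul_conj (r : ℝ) : ph r * (starRingEnd ℂ) (ph r) = 1 := by
  rw [conj_ph, ← ph_add]; simp [ph]

lemma prop_eq (d : ℕ) (t : ℝ) (f : EuclideanSpace ℝ (Fin d) → ℂ) (x) :
    schrodingerProp d (-t) f x =
      ∫ ξ, ph (4 * π ^ 2 * t * ‖ξ‖ ^ 2) * 𝓕 f ξ * ph (2 * π * ⟪x, ξ⟫) := by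
  unfold schrodingerProp ph
  congr 1; ext ξ
  congr 2
  · congr 2; push_cast; ring
  · push_cast; ring

lemma Mt_eq (d : ℕ) (t : ℝ) (w : EuclideanSpace ℝ (Fin d) → ℂ) (x) :
    Mt d t w x = ph (‖x‖ ^ 2 / (4 * t)) * w x := by
  unfold Mt ph
  congr 2; push_cast; ring

/-- shift lemma -/
lemma shift_lem {d : ℕ} {t : ℝ} (ht : t ≠ 0) (f : EuclideanSpace ℝ (Fin d) → ℂ) (x η) :
    Mt d t (schrodingerProp d (-t) f) (x + (4 * π * t) • η) =
      ph (‖x‖ ^ 2 / (4 * t)) *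
        ∫ ξ, ph (4 * π ^ 2 * t * ‖ξ‖ ^ 2) * 𝓕 f (ξ - η) * ph (2 * π * ⟪x, ξ⟫) := by
  rw [Mt_eq, prop_eq, ← integral_add_right_eq_self (μ := volume)
    (fun ξ => ph (4 * π ^ 2 * t * ‖ξ‖ ^ 2) * 𝓕 f (ξ - η) * ph (2 * π * ⟪x, ξ⟫)) η,
    ← integral_const_mul, ← integral_const_mul]
  congr 1; ext ξ
  rw [add_sub_cancel_right]
  have e : ph (‖x + (4 * π * t) • η‖ ^ 2 / (4 * t)) * (ph (4 * π ^ 2 * t * ‖ξ‖ ^ 2) * ph (2 * π * ⟪x + (4 * π * t) • η, ξ⟫))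
      = ph (‖x‖ ^ 2 / (4 * t)) * (ph (4 * π ^ 2 * t * ‖ξ + η‖ ^ 2) * ph (2 * π * ⟪x, ξ + η⟫)) := by
    rw [← ph_add, ← ph_add, ← ph_add, ← ph_add]
    congr 1
    rw [norm_add_sq_real, norm_add_sq_real, inner_smul_right, norm_smul, inner_add_left, inner_add_right,
      inner_smul_left, mul_pow, Real.norm_eq_abs, sq_abs, real_inner_comm η ξ]
    simp only [conj_trivial]
    field_simp
    ring
  linear_combination 𝓕 f ξ * e

lemma four_mul {d : ℕ} {q : EuclideanSpace ℝ (Fin d) → ℂ} (hq : Integrable q)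
    {u : EuclideanSpace ℝ (Fin d) → ℂ} (hu : Integrable u) (ξ) :
    𝓕 (fun x => (∫ η, q η * ph (2 * π * ⟪x, η⟫)) * u x) ξ = ∫ η, q η * 𝓕 u (ξ - η) := by
  simp_rw [Real.fourier_eq', smul_eq_mul, ← integral_mul_const, ← integral_const_mul]
  rw [integral_integral_swap]
  · congr 1; ext η
    congr 1; ext x
    have e : Complex.exp (((-2 * π * ⟪x, ξ⟫ : ℝ) : ℂ) * Complex.I) * ph (2 * π * ⟪x, η⟫) =
        Complex.exp (((-2 * π * ⟪x, ξ - η⟫ : ℝ) : ℂ) * Complex.I) := by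
      unfold ph
      rw [← Complex.exp_add, inner_sub_right]; congr 1; push_cast; ring
    linear_combination q η * u x * e
  · have h0 : Integrable (Function.uncurry fun x η => q η * u x) (volume.prod volume) := by
      have := hu.mul_prod hq
      exact this.congr (Eventually.of_forall fun z => by simp [Function.uncurry, mul_comm])
    have := h0.bdd_mul (c := 1) (f := fun z : EuclideanSpace ℝ (Fin d) × EuclideanSpace ℝ (Fin d) =>
      Complex.exp (((-2 * π * ⟪z.1, ξ⟫ : ℝ) : ℂ) * Complex.I) * ph (2 * π * ⟪z.1, z.2⟫)) (μ := volume.prod volume)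
      (by
        refine Continuous.aestronglyMeasurable ?_
        have := ph_cont
        fun_prop)
      (Eventually.of_forall fun z => by rw [norm_mul, norm_ph, Complex.norm_exp_ofReal_mul_I, one_mul])
    refine this.congr (Eventually.of_forall fun z => ?_)
    simp only [Function.uncurry]
    ring

lemma T_mul {d : ℕ} {t : ℝ} (ht : t ≠ 0) {q : EuclideanSpace ℝ (Fin d) → ℂ} (hq : Integrable q)
    (u : SchwartzMap (EuclideanSpace ℝ (Fin d)) ℂ) (x) :
    Mt d t (schrodingerProp d (-t) (fun x => (∫ η, q η * ph (2 * π * ⟪x, η⟫)) * u x)) x =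
      ∫ η, q η * Mt d t (schrodingerProp d (-t) (⇑u)) (x + (4 * π * t) • η) := by
  have hFu : Integrable (𝓕 (⇑u)) := by
    rw [← SchwartzMap.fourier_coe]; exact (𝓕 u).integrable
  simp_rw [shift_lem ht]
  rw [Mt_eq, prop_eq]
  simp_rw [four_mul hq u.integrable, mul_left_comm (q _), integral_const_mul]
  congr 1
  simp_rw [← integral_const_mul, ← integral_mul_const]
  rw [integral_integral_swap]
  · congr 1; ext η; congr 1; ext ξ; ring
  · have h0 : Integrable (Function.uncurry fun ξ η => q η * 𝓕 (⇑u) (ξ - η)) (volume.prod volume) := by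
      have := (hq.convolution_integrand (ContinuousLinearMap.mul ℝ ℂ) hFu)
      exact this
    have := h0.bdd_mul (c := 1) (f := fun z : EuclideanSpace ℝ (Fin d) × EuclideanSpace ℝ (Fin d) =>
      ph (4 * π ^ 2 * t * ‖z.1‖ ^ 2) * ph (2 * π * ⟪x, z.1⟫)) (μ := volume.prod volume)
      (by
        refine Continuous.aestronglyMeasurable ?_
        have := ph_cont
        fun_prop)
      (Eventually.of_forall fun z => by rw [norm_mul, norm_ph, norm_ph, one_mul])
    refine this.congr (Eventually.of_forall fun z => ?_)
    simp only [Function.uncurry]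
    ring

lemma ph_deriv (n : ℕ) : iteratedDeriv n ph = fun x => Complex.I ^ n * ph x := by
  induction n with
  | zero => simp
  | succ n ih =>
    rw [iteratedDeriv_succ, ih]
    ext x
    have h : HasDerivAt ph (Complex.I * ph x) x := by
      have := ((Complex.ofRealCLM.hasDerivAt (x := x)).mul_const Complex.I).cexp
      simp only [Complex.ofRealCLM_apply, Complex.ofReal_one, one_mul] at this
      rw [mul_comm]; exact this
    rw [(h.const_mul (Complex.I ^ n)).deriv, pow_succ]; ring

lemma ph_temp : Function.HasTemperateGrowth ph := by
  refine ⟨?_, fun n => ⟨0, 1, fun x => ?_⟩⟩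
  · unfold ph
    exact ((Complex.ofRealCLM.contDiff).mul contDiff_const).cexp
  · rw [norm_iteratedFDeriv_eq_norm_iteratedDeriv, ph_deriv, norm_mul, norm_ph]
    simp

lemma ph_quad_temp (d : ℕ) (s : ℝ) :
    Function.HasTemperateGrowth (fun x : EuclideanSpace ℝ (Fin d) => ph (s * ‖x‖ ^ 2)) := by
  refine ph_temp.comp (f := fun x : EuclideanSpace ℝ (Fin d) => s * ‖x‖ ^ 2) ?_
  exact (Function.HasTemperateGrowth.const s).mul (Function.hasTemperateGrowth_norm_sq _)

lemma ph_inner_temp (d : ℕ) (s : ℝ) (η : EuclideanSpace ℝ (Fin d)) :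
    Function.HasTemperateGrowth (fun x : EuclideanSpace ℝ (Fin d) => ph (s * ⟪x, η⟫)) := by
  refine ph_temp.comp (f := fun x : EuclideanSpace ℝ (Fin d) => s * ⟪x, η⟫) ?_
  exact (Function.HasTemperateGrowth.const s).mul (Function.hasTemperateGrowth_inner_left η)

end helpers5

section helpers6
open Set Filter

lemma T_eq_inv {d : ℕ} {t : ℝ} (ht : t ≠ 0) (u : SchwartzMap (EuclideanSpace ℝ (Fin d)) ℂ) (x η) :
    Mt d t (schrodingerProp d (-t) (⇑u)) (x + (4 * π * t) • η) =
      ph (‖x‖ ^ 2 / (4 * t)) *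
        (𝓕⁻ (SchwartzMap.smulLeftCLM ℂ (fun ξ : EuclideanSpace ℝ (Fin d) => ph (4 * π ^ 2 * t * ‖ξ‖ ^ 2))
          (𝓕 (SchwartzMap.smulLeftCLM ℂ (fun y : EuclideanSpace ℝ (Fin d) => ph (2 * π * ⟪y, η⟫)) u)))) x := by
  rw [shift_lem ht, SchwartzMap.fourierInv_coe, Real.fourierInv_eq']
  congr 2; ext ξ
  rw [SchwartzMap.smulLeftCLM_apply_apply (ph_quad_temp d _), SchwartzMap.fourier_coe]
  have e : 𝓕 (⇑(SchwartzMap.smulLeftCLM ℂ (fun y : EuclideanSpace ℝ (Fin d) => ph (2 * π * ⟪y, η⟫)) u)) ξ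
      = 𝓕 (⇑u) (ξ - η) := by
    rw [Real.fourier_eq', Real.fourier_eq']
    congr 1; ext y
    rw [SchwartzMap.smulLeftCLM_apply_apply (ph_inner_temp d _ η)]
    simp only [smul_eq_mul]
    rw [← mul_assoc]
    congr 1
    unfold ph
    rw [← Complex.exp_add, inner_sub_right]; congr 1; push_cast; ring
  rw [e]
  simp only [smul_eq_mul]
  rw [real_inner_comm]
  unfold ph
  ring

/-- product of a Schwartz function with the conjugate of another -/
noncomputable def pairS {d : ℕ} (u v : SchwartzMap (EuclideanSpace ℝ (Fin d)) ℂ) :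
    SchwartzMap (EuclideanSpace ℝ (Fin d)) ℂ :=
  SchwartzMap.pairing (ContinuousLinearMap.mul ℝ ℂ) u
    (v.postcompCLM (Complex.conjCLE : ℂ →L[ℝ] ℂ))

lemma pairS_apply {d : ℕ} (u v : SchwartzMap (EuclideanSpace ℝ (Fin d)) ℂ) (x) :
    pairS u v x = u x * (starRingEnd ℂ) (v x) := rfl

lemma unitarity {d : ℕ} {t : ℝ} (ht : t ≠ 0) (u v : SchwartzMap (EuclideanSpace ℝ (Fin d)) ℂ) (η) :
    ∫ y, Mt d t (schrodingerProp d (-t) (⇑u)) y *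
      (starRingEnd ℂ) (Mt d t (schrodingerProp d (-t) (⇑v)) (y + (4 * π * t) • η)) =
      𝓕 (⇑(pairS u v)) η := by
  have h0 : ∀ y, Mt d t (schrodingerProp d (-t) (⇑u)) y = ph (‖y‖ ^ 2 / (4 * t)) *
        (𝓕⁻ (SchwartzMap.smulLeftCLM ℂ (fun ξ : EuclideanSpace ℝ (Fin d) => ph (4 * π ^ 2 * t * ‖ξ‖ ^ 2)) (𝓕 u))) y := by
    intro y
    have := T_eq_inv ht u y 0
    rw [smul_zero, add_zero] at this
    rw [this]
    congr 5
    ext z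
    rw [SchwartzMap.smulLeftCLM_apply_apply (ph_inner_temp d _ 0)]
    simp [ph]
  set w := SchwartzMap.smulLeftCLM ℂ (fun y : EuclideanSpace ℝ (Fin d) => ph (2 * π * ⟪y, η⟫)) v with hw
  set G1 := SchwartzMap.smulLeftCLM ℂ (fun ξ : EuclideanSpace ℝ (Fin d) => ph (4 * π ^ 2 * t * ‖ξ‖ ^ 2)) (𝓕 u) with hG1
  set G2 := SchwartzMap.smulLeftCLM ℂ (fun ξ : EuclideanSpace ℝ (Fin d) => ph (4 * π ^ 2 * t * ‖ξ‖ ^ 2)) (𝓕 w) with hG2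
  have e1 : ∀ y, Mt d t (schrodingerProp d (-t) (⇑u)) y *
      (starRingEnd ℂ) (Mt d t (schrodingerProp d (-t) (⇑v)) (y + (4 * π * t) • η)) =
      inner ℂ ((𝓕⁻ G2) y) ((𝓕⁻ G1) y) := by
    intro y
    rw [h0, T_eq_inv ht v y η, map_mul, RCLike.inner_apply]
    have := ph_mul_conj (‖y‖ ^ 2 / (4 * t))
    linear_combination ((𝓕⁻ G1) y * (starRingEnd ℂ) ((𝓕⁻ G2) y)) * this
  simp_rw [e1]
  have p1 := SchwartzMap.integral_inner_fourier_fourier (𝓕⁻ G2) (𝓕⁻ G1)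
  rw [FourierTransform.fourier_fourierInv_eq, FourierTransform.fourier_fourierInv_eq] at p1
  rw [← p1]
  have e2 : ∀ ξ, inner ℂ (G2 ξ) (G1 ξ) = inner ℂ ((𝓕 w) ξ) ((𝓕 u) ξ) := by
    intro ξ
    rw [hG1, hG2, SchwartzMap.smulLeftCLM_apply_apply (ph_quad_temp d _),
      SchwartzMap.smulLeftCLM_apply_apply (ph_quad_temp d _), RCLike.inner_apply, RCLike.inner_apply,
      smul_eq_mul, smul_eq_mul, map_mul]
    have := ph_mul_conj (4 * π ^ 2 * t * ‖ξ‖ ^ 2)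
    linear_combination ((𝓕 u) ξ * (starRingEnd ℂ) ((𝓕 w) ξ)) * this
  simp_rw [e2]
  rw [SchwartzMap.integral_inner_fourier_fourier, Real.fourier_eq']
  congr 1; ext y
  rw [RCLike.inner_apply, hw, SchwartzMap.smulLeftCLM_apply_apply (ph_inner_temp d _ η), pairS_apply,
    smul_eq_mul, smul_eq_mul, map_mul, conj_ph]
  have : ph (-(2 * π * ⟪y, η⟫)) = Complex.exp (((-2 * π * ⟪y, η⟫ : ℝ) : ℂ) * Complex.I) := by
    unfold ph; congr 2; push_cast; ring
  rw [this]; ring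

lemma conv_T {d : ℕ} {t : ℝ} (ht : t ≠ 0) (u v : SchwartzMap (EuclideanSpace ℝ (Fin d)) ℂ) (η) :
    convC (Mt d t (schrodingerProp d (-t) (⇑u)))
      (fun y => (starRingEnd ℂ) (Mt d t (schrodingerProp d (-t) (⇑v)) (-y))) ((-(4 * π * t)) • η) =
      𝓕 (⇑(pairS u v)) η := by
  rw [← unitarity ht]
  unfold convC
  have e : ∀ y : EuclideanSpace ℝ (Fin d), -((-(4 * π * t)) • η - y) = y + (4 * π * t) • η := by
    intro y; rw [neg_smul]; abel
  simp_rw [e]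

/-- scaling constant -/
noncomputable def c0 (d : ℕ) (γ : ℝ) (az : Bool) : ℝ :=
  if az = true then (4 * π) ^ (γ - d) / rieszC d γ
  else (4 * π) ^ d * (4 * π) ^ (γ - d) * (16 * π) ^ (-(((d : ℝ) + 1) / 2)) *
    (2 * π / Real.Gamma (((d:ℝ)+1)/2)) / rieszC d γ

lemma c0_pos {d : ℕ} {γ : ℝ} (hγ0 : 0 < γ) (hγd : γ < d) (az : Bool) : 0 < c0 d γ az := by
  have h1 := rieszC_pos hγ0 hγd
  have h2 : 0 < Real.Gamma (((d:ℝ)+1)/2) := Real.Gamma_pos_of_pos (by positivity)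
  unfold c0
  split_ifs <;> positivity

lemma riesz_smul {d : ℕ} {γ s : ℝ} (x : EuclideanSpace ℝ (Fin d)) :
    riesz d γ (s • x) = |s| ^ (γ - d) * riesz d γ x := by
  unfold riesz
  rw [norm_smul, Real.mul_rpow (norm_nonneg _) (norm_nonneg _), Real.norm_eq_abs]

lemma S_scale {d : ℕ} {a t : ℝ} (ha : 0 < a) (ht : t ≠ 0) (z : EuclideanSpace ℝ (Fin d)) :
    Skernel d a t ((-(4 * π * t)) • z) =
      (|t| ^ d)⁻¹ * ((16 * π) ^ (-(((d : ℝ) + 1) / 2)) * (2 * π / Real.Gamma (((d:ℝ)+1)/2))) * poissonK d a z := by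
  unfold Skernel poissonK
  have hG : 0 < Real.Gamma (((d:ℝ)+1)/2) := Real.Gamma_pos_of_pos (by positivity)
  have hB : 0 < a ^ 2 / (4 * π) + π * ‖z‖ ^ 2 := by positivity
  have hT : 0 < |t| := abs_pos.2 ht
  have e : 4 * a ^ 2 * t ^ 2 + ‖(-(4 * π * t)) • z‖ ^ 2 =
      (|t| ^ 2) * (16 * π) * (a ^ 2 / (4 * π) + π * ‖z‖ ^ 2) := by
    rw [norm_smul, norm_neg, mul_pow, Real.norm_eq_abs, sq_abs, sq_abs]
    field_simp; ring
  have e2 : (|t| ^ 2) ^ (-(((d : ℝ) + 1) / 2)) = (|t| ^ d)⁻¹ * |t|⁻¹ := by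
    rw [← Real.rpow_natCast |t| 2, ← Real.rpow_mul hT.le]
    rw [show ((2:ℕ):ℝ) * (-(((d : ℝ) + 1) / 2)) = -(((d+1:ℕ):ℝ)) by push_cast; ring, Real.rpow_neg hT.le,
      Real.rpow_natCast, pow_succ, mul_inv]
  rw [e, Real.mul_rpow (by positivity) hB.le, Real.mul_rpow (by positivity) (by positivity), e2,
    one_div, Real.inv_rpow hB.le, ← Real.rpow_neg hB.le]
  field_simp

lemma HK_scale {d : ℕ} {γ a t : ℝ} (hγ0 : 0 < γ) (hγd : γ < d) (ha : 0 ≤ a) (ht : t ≠ 0) (az : Bool)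
    (haz : az = true ↔ a = 0) (η : EuclideanSpace ℝ (Fin d)) :
    hartreeKernel d γ a t ((-(4 * π * t)) • η) = c0 d γ az * |t| ^ (γ - d) * kA d γ a η := by
  have hR := rieszC_pos hγ0 hγd
  have hT : 0 < |t| := abs_pos.2 ht
  have hs : |-(4 * π * t)| = 4 * π * |t| := by
    rw [abs_neg, abs_mul, abs_of_pos (by positivity : (0:ℝ) < 4 * π)]
  have hrz : ∀ x : EuclideanSpace ℝ (Fin d), riesz d γ ((-(4 * π * t)) • x) =
      (4 * π) ^ (γ - d) * |t| ^ (γ - d) * riesz d γ x := by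
    intro x
    rw [riesz_smul, hs, Real.mul_rpow (by positivity) hT.le]
  by_cases h0 : a = 0
  · have : az = true := haz.2 h0
    simp only [hartreeKernel, kA, c0, if_pos h0, if_pos this]
    rw [hrz]; field_simp
  · have : ¬ az = true := fun h => h0 (haz.1 h)
    simp only [hartreeKernel, kA, c0, if_neg h0, if_neg this]
    have hap : 0 < a := lt_of_le_of_ne ha (Ne.symm h0)
    unfold convR
    have hsub := Measure.integral_comp_smul (volume : Measure (EuclideanSpace ℝ (Fin d)))
      (fun y => Skernel d a t y * riesz d γ ((-(4 * π * t)) • η - y)) (-(4 * π * t))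
    have hpt : ∀ z : EuclideanSpace ℝ (Fin d), Skernel d a t ((-(4 * π * t)) • z) * riesz d γ ((-(4 * π * t)) • η - (-(4 * π * t)) • z)
      = ((|t| ^ d)⁻¹ * ((16 * π) ^ (-(((d : ℝ) + 1) / 2)) * (2 * π / Real.Gamma (((d:ℝ)+1)/2))) * ((4 * π) ^ (γ - d) * |t| ^ (γ - d))) *
        (poissonK d a z * riesz d γ (η - z)) := by
      intro z
      rw [← smul_sub, hrz, S_scale hap ht]; ring
    simp_rw [hpt] at hsub
    rw [integral_const_mul, finrank_euclideanSpace_fin, abs_inv, abs_pow, hs, smul_eq_mul,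
      eq_inv_mul_iff_mul_eq₀ (by positivity)] at hsub
    rw [← hsub]
    have hG : 0 < Real.Gamma (((d:ℝ)+1)/2) := Real.Gamma_pos_of_pos (by positivity)
    rw [mul_pow (4 * π) |t|]
    field_simp

end helpers6

theorem hartree_factorization (d : ℕ) (hd : 1 ≤ d) (γ : ℝ)
    (hγ0 : 0 < γ) (hγd : γ < d) (sgn az : Bool) :
    ∃ c : ℂ, c ≠ 0 ∧ ∀ a t : ℝ, 0 ≤ a → t ≠ 0 →
      ((az = true) ↔ a = 0) → ((sgn = true) ↔ 0 < t) →
      ∀ u₁ u₂ u₃ : SchwartzMap (EuclideanSpace ℝ (Fin d)) ℂ,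
        Mt d t (schrodingerProp d (-t) (hartreeOp d a γ (⇑u₁) (⇑u₂) (⇑u₃))) =
          fun x => c * ((|t| ^ (-γ) : ℝ) : ℂ) *
            hartreeTrilinear d γ a t
              (Mt d t (schrodingerProp d (-t) (⇑u₁)))
              (fun y => Mt d t (schrodingerProp d (-t) (⇑u₂)) (-y))
              (Mt d t (schrodingerProp d (-t) (⇑u₃))) x := by
  have hc0 := c0_pos hγ0 hγd az
  refine ⟨(((4 * π) ^ d * c0 d γ az)⁻¹ : ℝ), ?_, ?_⟩
  · rw [Complex.ofReal_ne_zero]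
    positivity
  intro a t ha ht haz _ u₁ u₂ u₃
  have hT : 0 < |t| := abs_pos.2 ht
  ext x
  obtain ⟨hq, hA⟩ := A_formula hd hγ0 hγd ha (pairS u₁ u₂)
  have hop : hartreeOp d a γ (⇑u₁) (⇑u₂) (⇑u₃) = fun x =>
      (∫ η, ((kA d γ a η : ℂ) * 𝓕 (⇑(pairS u₁ u₂)) η) * ph (2 * π * ⟪x, η⟫)) * u₃ x := by
    ext z
    unfold hartreeOp
    congr 1
    exact hA z
  rw [hop, T_mul ht hq u₃ x]
  unfold hartreeTrilinear
  conv_rhs => unfold convC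
  have hsub := Measure.integral_comp_smul (volume : Measure (EuclideanSpace ℝ (Fin d)))
    (fun y => (hartreeKernel d γ a t y : ℂ) *
      convC (Mt d t (schrodingerProp d (-t) (⇑u₁)))
        (fun y => (starRingEnd ℂ) (Mt d t (schrodingerProp d (-t) (⇑u₂)) (-y))) y *
        Mt d t (schrodingerProp d (-t) (⇑u₃)) (x - y)) (-(4 * π * t))
  have hs : |-(4 * π * t)| = 4 * π * |t| := by
    rw [abs_neg, abs_mul, abs_of_pos (by positivity : (0:ℝ) < 4 * π)]
  have e : ∀ η : EuclideanSpace ℝ (Fin d), x - (-(4 * π * t)) • η = x + (4 * π * t) • η := by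
    intro η; rw [neg_smul]; abel
  simp_rw [conv_T ht, HK_scale hγ0 hγd ha ht az haz, e] at hsub
  have hpt : ∀ η : EuclideanSpace ℝ (Fin d), ((c0 d γ az * |t| ^ (γ - d) * kA d γ a η : ℝ) : ℂ) * 𝓕 (⇑(pairS u₁ u₂)) η *
      Mt d t (schrodingerProp d (-t) (⇑u₃)) (x + (4 * π * t) • η) =
      ((c0 d γ az * |t| ^ (γ - d) : ℝ) : ℂ) * ((kA d γ a η : ℂ) * 𝓕 (⇑(pairS u₁ u₂)) η *
      Mt d t (schrodingerProp d (-t) (⇑u₃)) (x + (4 * π * t) • η)) := by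
    intro η; push_cast; ring
  simp_rw [hpt] at hsub
  rw [integral_const_mul, finrank_euclideanSpace_fin, abs_inv, abs_pow, hs, Complex.real_smul] at hsub
  unfold convC at hsub
  have hK : (((4 * π * |t|) ^ d)⁻¹ : ℝ) ≠ 0 := by positivity
  have hK' : ((((4 * π * |t|) ^ d)⁻¹ : ℝ) : ℂ) ≠ 0 := Complex.ofReal_ne_zero.2 hK
  apply mul_left_cancel₀ hK'
  rw [mul_left_comm, ← hsub, ← mul_assoc]
  congr 1
  norm_cast
  have e3 : |t| ^ (γ - d) = |t| ^ γ / |t| ^ d := by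
    rw [Real.rpow_sub hT, Real.rpow_natCast]
  rw [e3, Real.rpow_neg hT.le, mul_pow]
  have : 0 < |t| ^ γ := by positivity
  field_simp
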